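/- For every integer n ≥ 1, the Krull dimension of the ring ℂ[x_{ij}, y_{ij} (1 ≤ i,j ≤ n)] / I equals n² + n − 2, where X = (x_{ij}) and Y = (y_{ij}) are the generic n×n matrices and I is the ideal generated by the n² entries of XY − YX together with det(X) − 1 and det(Y) − 1. (This ring is the coordinate ring of the commuting variety C(SL_n) = {(a,b) ∈ SL_n × SL_n : ab = ba}, so this says dim C(SL_n) = (n²−1) + (n−1), i.e. the commuting probability p(SL_n) = dim C(SL_n)/(2·dim SL_n) equals 1/2 + 1/(2(n+1)).) -/

import Mathlib

open MvPolynomial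

/-- The generic matrix `X` of size `n × n`, with entries the variables `x_{ij}`. -/
noncomputable def genX (n : ℕ) :
    Matrix (Fin n) (Fin n)
      (MvPolynomial ((Fin n × Fin n) ⊕ (Fin n × Fin n)) ℂ) :=
  fun i j => X (Sum.inl (i, j))

/-- The generic matrix `Y` of size `n × n`, with entries the variables `y_{ij}`. -/
noncomputable def genY (n : ℕ) :
    Matrix (Fin n) (Fin n)
      (MvPolynomial ((Fin n × Fin n) ⊕ (Fin n × Fin n)) ℂ) :=
  fun i j => X (Sum.inr (i, j))

/-!
By Noether normalization, the Krull dimension of a finitely generated algebra over a field `k` is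
the largest transcendence degree of the subfields generated by its points in algebraically closed
extensions `L` of `k`. A point of the commuting variety is a pair of commuting matrices `x`, `y`
over `L` of determinant one.

Write `x = g J g⁻¹` with `J` algebraic over the coefficients of the characteristic polynomial of
`x`, of which `n - 1` are free. The matrices `g` with `x g = g J` form a space whose dimension is
that of the centralizer of `x`, say `c`, so `g` can be chosen with `c` of its entries algebraic over
`k`, and the remaining `n² - c` entries determine `x`. Finally `y` lies in the centralizer of `x`,
which costs `c` parameters, one of which is determined up to finitely many choices by `det y = 1`.
The total is at most `(n - 1) + (n² - c) + (c - 1) = n² + n - 2`.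

Conversely, a generic matrix and a generic polynomial of degree less than `n` in it form a commuting
pair depending on `n² + n` independent parameters, and rescaling both to determinant one loses at
most two of them.
-/

section KrullDimension

theorem ringKrullDim_eq_of_isIntegral (R S : Type*) [CommRing R] [CommRing S] [Algebra R S]
    [Algebra.IsIntegral R S] [FaithfulSMul R S] : ringKrullDim S = ringKrullDim R := by
  apply le_antisymm
  · exact Order.krullDim_le_of_strictMono (PrimeSpectrum.comap (algebraMap R S))
      fun P Q hPQ => Ideal.IsIntegral.comap_lt_comap (R := R) (I := P.asIdeal) (J := Q.asIdeal) hPQ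
  · refine iSup_le fun chain => ?_
    obtain ⟨⟨P, _, _⟩⟩ := chain.head.asIdeal.nonempty_primesOver (S := S)
    obtain ⟨lifted, hlength, -⟩ := Ideal.exists_ltSeries_of_hasGoingUp chain P
    exact hlength ▸ Order.LTSeries.length_le_krullDim lifted

end KrullDimension

section AlgebraicClosure

variable {k L : Type*} [Field k] [Field L] [Algebra k L]

variable (k) in
/-- The relative algebraic closure in `L` of the subfield `k(s)`, as an intermediate field of
`L / k`. The smallest size of an `s` with `K ≤ algClosureAdjoin k s` is the transcendence degree of
`K / k`. -/
noncomputable def algClosureAdjoin (s : Set L) : IntermediateField k L :=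
  (algebraicClosure (IntermediateField.adjoin k s) L).restrictScalars k

theorem subset_algClosureAdjoin (s : Set L) : s ⊆ algClosureAdjoin k s := fun z hz =>
  IntermediateField.algebraMap_mem (algebraicClosure (IntermediateField.adjoin k s) L)
    ⟨z, IntermediateField.subset_adjoin k s hz⟩

instance isIntegrallyClosedIn_algClosureAdjoin (s : Set L) :
    IsIntegrallyClosedIn (algClosureAdjoin k s) L :=
  inferInstanceAs (IsIntegrallyClosedIn (integralClosure (IntermediateField.adjoin k s) L) L)

theorem card_le_card_of_forall_mem_algClosureAdjoin {ι : Type*} [Fintype ι] {v : ι → L}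
    (hv : AlgebraicIndependent k v) {s : Finset L}
    (hvs : ∀ i, v i ∈ algClosureAdjoin k (s : Set L)) : Fintype.card ι ≤ s.card := by
  have hindep : (AlgebraicIndependent.matroid k L).Indep (Set.range v) :=
    AlgebraicIndependent.matroid_indep_iff.2 hv.to_subtype_range
  have hsub : Set.range v ⊆ (AlgebraicIndependent.matroid k L).closure s := by
    rintro _ ⟨i, rfl⟩
    rw [AlgebraicIndependent.matroid_closure_eq]
    exact IntermediateField.isAlgebraic_adjoin_iff.1 (hvs i).isAlgebraic
  have hle : (Set.range v).encard ≤ (s : Set L).encard := by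
    calc (Set.range v).encard
      _ ≤ (AlgebraicIndependent.matroid k L).eRk ((AlgebraicIndependent.matroid k L).closure s) :=
        hindep.encard_le_eRk_of_subset hsub
      _ = (AlgebraicIndependent.matroid k L).eRk s := Matroid.eRk_closure_eq _ _
      _ ≤ (s : Set L).encard := Matroid.eRk_le_encard _ _
  rw [← Set.image_univ, hv.injective.encard_image] at hle
  simpa using hle

variable {M : IntermediateField k L} [IsIntegrallyClosedIn M L]

theorem mem_of_isIntegral {z : L} (hz : IsIntegral M z) : z ∈ M := by
  obtain ⟨w, rfl⟩ := IsIntegrallyClosedIn.algebraMap_eq_of_integral hz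
  exact w.2

theorem algClosureAdjoin_le {s : Set L} (hs : s ⊆ M) : algClosureAdjoin k s ≤ M := fun _ hz => by
  let incl := IntermediateField.inclusion (IntermediateField.adjoin_le_iff.2 hs)
  algebraize [incl.toRingHom]
  have : IsScalarTower (IntermediateField.adjoin k s) M L := .of_algebraMap_eq fun _ => rfl
  exact mem_of_isIntegral (IsIntegral.tower_top hz)

theorem mem_of_pow_mem {d : ℕ} (hd : d ≠ 0) {z : L} (hz : z ^ d ∈ M) : z ∈ M :=
  mem_of_isIntegral (.of_pow hd.bot_lt (isIntegral_algebraMap (x := (⟨z ^ d, hz⟩ : M))))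

theorem coeff_mem_of_dvd {p q : Polynomial L} (hp : p.Monic) (hq : q.Monic) (hqp : q ∣ p)
    (hpM : ∀ i, p.coeff i ∈ M) (i : ℕ) : q.coeff i ∈ M := by
  have hlifts : p ∈ Polynomial.lifts (algebraMap M L) :=
    (Polynomial.lifts_iff_coeff_lifts p).2 fun j => ⟨⟨_, hpM j⟩, rfl⟩
  obtain ⟨p', rfl, -, hp'⟩ := Polynomial.lifts_and_natDegree_eq_and_monic hlifts hp
  exact mem_of_isIntegral (Polynomial.isIntegral_coeff_of_dvd p' q hp' hq hqp i)

theorem algHom_mem_of_isIntegral {A R : Type*} [CommRing A] [CommRing R] [Algebra k A] [Algebra k R]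
    [Algebra A R] [IsScalarTower k A R] [Algebra.IsIntegral A R] (φ : R →ₐ[k] L)
    (hφ : ∀ a, φ (algebraMap A R a) ∈ M) (r : R) : φ r ∈ M := by
  let ψ : A →ₐ[k] M := (φ.comp (IsScalarTower.toAlgHom k A R)).codRestrict M.toSubalgebra hφ
  obtain ⟨p, hp, hpr⟩ := Algebra.IsIntegral.isIntegral (R := A) r
  refine mem_of_isIntegral ⟨p.map ψ.toRingHom, hp.map _, ?_⟩
  rw [Polynomial.eval₂_map]
  exact (Polynomial.hom_eval₂ p (algebraMap A R) φ.toRingHom r).symm.trans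
    ((congrArg φ hpr).trans (map_zero φ))

end AlgebraicClosure

section NoetherNormalization

theorem mem_of_forall_X_mem {σ k A : Type*} [CommSemiring k] [CommSemiring A] [Algebra k A]
    (f : MvPolynomial σ k →ₐ[k] A) (S : Subalgebra k A) (hf : ∀ i, f (X i) ∈ S)
    (p : MvPolynomial σ k) : f p ∈ S := by
  have hle : Algebra.adjoin k (Set.range X) ≤ S.comap f :=
    Algebra.adjoin_le (Set.range_subset_iff.2 hf)
  exact hle (MvPolynomial.adjoin_range_X (R := k) (σ := σ) ▸ Algebra.mem_top)

universe u v

variable (k : Type v) {R : Type u} [Field k] [CommRing R] [Algebra k R]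

theorem exists_algHom_isAlgClosed_ker_eq (Q : Ideal R) [Q.IsPrime] :
    ∃ (L : Type u) (_ : Field L) (_ : Algebra k L) (_ : IsAlgClosed L) (φ : R →ₐ[k] L),
      RingHom.ker φ = Q := by
  refine ⟨AlgebraicClosure Q.ResidueField, inferInstance, inferInstance, inferInstance,
    (IsScalarTower.toAlgHom k Q.ResidueField _).comp (IsScalarTower.toAlgHom k R _), ?_⟩
  exact (RingHom.ker_comp_of_injective _ (algebraMap Q.ResidueField _).injective).trans
    (Ideal.ker_algebraMap_residueField Q)

variable [Algebra.FiniteType k R]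

theorem exists_noetherNormalization_ringKrullDim_eq [Nontrivial R] :
    ∃ (d : ℕ) (_ : Algebra (MvPolynomial (Fin d) k) R),
      IsScalarTower k (MvPolynomial (Fin d) k) R ∧ Algebra.IsIntegral (MvPolynomial (Fin d) k) R ∧
      FaithfulSMul (MvPolynomial (Fin d) k) R ∧ ringKrullDim R = d := by
  obtain ⟨d, g, hinj, hint⟩ := exists_integral_inj_algHom_of_fg k R
  algebraize [g.toRingHom]
  have : FaithfulSMul (MvPolynomial (Fin d) k) R :=
    (faithfulSMul_iff_algebraMap_injective _ _).2 hinj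
  refine ⟨d, inferInstance, .of_algebraMap_eq fun c => (g.commutes c).symm, inferInstance, this, ?_⟩
  rw [ringKrullDim_eq_of_isIntegral (MvPolynomial (Fin d) k) R,
    MvPolynomial.ringKrullDim_of_isNoetherianRing, ringKrullDim_eq_zero_of_field, zero_add]
  simp

theorem exists_finset_card_le_ringKrullDim {L : Type*} [Field L] [Algebra k L] (φ : R →ₐ[k] L) :
    ∃ s : Finset L, s.card ≤ ringKrullDim R ∧ ∀ r, φ r ∈ algClosureAdjoin k (s : Set L) := by
  classical
  have := φ.toRingHom.domain_nontrivial
  obtain ⟨d, _, _, _, _, hdim⟩ := exists_noetherNormalization_ringKrullDim_eq k (R := R)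
  let v : Fin d → L := fun i => φ (algebraMap (MvPolynomial (Fin d) k) R (X i))
  refine ⟨Finset.univ.image v, ?_, algHom_mem_of_isIntegral (A := MvPolynomial (Fin d) k) φ ?_⟩
  · rw [hdim]
    exact_mod_cast Finset.card_image_le.trans_eq (Finset.card_fin d)
  · exact mem_of_forall_X_mem (φ.comp (IsScalarTower.toAlgHom k (MvPolynomial (Fin d) k) R))
      (algClosureAdjoin k _).toSubalgebra fun i => subset_algClosureAdjoin _ (by simp [v])

theorem ringKrullDim_le_of_forall_algHom {d : ℕ}
    (h : ∀ (L : Type u) [Field L] [Algebra k L] [IsAlgClosed L] (φ : R →ₐ[k] L),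
      ∃ s : Finset L, s.card ≤ d ∧ ∀ r, φ r ∈ algClosureAdjoin k (s : Set L)) :
    ringKrullDim R ≤ d := by
  nontriviality R
  obtain ⟨e, _, _, _, _, hdim⟩ := exists_noetherNormalization_ringKrullDim_eq k (R := R)
  obtain ⟨⟨Q, _, _⟩⟩ := (⊥ : Ideal (MvPolynomial (Fin e) k)).nonempty_primesOver (S := R)
  obtain ⟨L, _, _, _, φ, hker⟩ := exists_algHom_isAlgClosed_ker_eq k Q
  have hinj :
      Function.Injective (φ.comp (IsScalarTower.toAlgHom k (MvPolynomial (Fin e) k) R)) := by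
    refine (injective_iff_map_eq_zero _).2 fun p hp => ?_
    have hpQ : algebraMap _ R p ∈ Q := hker ▸ hp
    exact (Ideal.mem_of_liesOver Q ⊥ p).2 hpQ
  obtain ⟨s, hs, hφ⟩ := h L φ
  have hle := card_le_card_of_forall_mem_algClosureAdjoin
    ((MvPolynomial.algebraicIndependent_X (Fin e) k).map' hinj) fun i => hφ _
  rw [hdim]
  exact_mod_cast (Fintype.card_fin e ▸ hle).trans hs

end NoetherNormalization

section MatrixEntries

variable {k L m : Type*} [Field k] [Field L] [Algebra k L] [Fintype m] [DecidableEq m]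
  {M : IntermediateField k L} {a : Matrix m m L}

theorem det_mem_of_mem_matrix (ha : a ∈ M.toSubalgebra.matrix) : a.det ∈ M := by
  have hlift : a = M.val.mapMatrix (Matrix.of fun i j => ⟨a i j, ha i j⟩) := rfl
  rw [hlift, ← AlgHom.map_det]
  exact Subtype.property _

theorem inv_mem_matrix (ha : a ∈ M.toSubalgebra.matrix) : a⁻¹ ∈ M.toSubalgebra.matrix := by
  intro i j
  have hlift : a = M.val.mapMatrix (Matrix.of fun i j => ⟨a i j, ha i j⟩) := rfl
  rw [Matrix.inv_def, Ring.inverse_eq_inv', Matrix.smul_apply, hlift, ← AlgHom.map_adjugate]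
  exact M.mul_mem (M.inv_mem (det_mem_of_mem_matrix ha)) (Subtype.property _)

theorem mem_matrix_of_smul_mem {c : L} (hc : c ≠ 0) (hcM : c ∈ M)
    (hca : c • a ∈ M.toSubalgebra.matrix) : a ∈ M.toSubalgebra.matrix := fun i j => by
  have hij : a i j = c⁻¹ * (c • a) i j := by
    rw [Matrix.smul_apply, smul_eq_mul, inv_mul_cancel_left₀ hc]
  rw [hij]
  exact M.mul_mem (M.inv_mem hcM) (hca i j)

end MatrixEntries

section Coordinates

variable {L V ι : Type*} [Field L] [AddCommGroup V] [Module L V] [Finite ι]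

theorem exists_finset_bijective_restrict {T : V →ₗ[L] ι → L} (hT : Function.Injective T) :
    ∃ κ : Finset ι, κ.card = Module.finrank L V ∧
      Function.Bijective (LinearMap.funLeft L L ((↑) : κ → ι) ∘ₗ T) := by
  have : FiniteDimensional L V := .of_injective T hT
  let f : ι → Module.Dual L V := fun i => LinearMap.proj i ∘ₗ T
  obtain ⟨κ, -, -, hspan, hindep⟩ := exists_linearIndepOn_extension
    (linearIndepOn_empty L f) (Set.empty_subset Set.univ)
  lift κ to Finset ι using κ.toFinite
  have hinj : Function.Injective (LinearMap.funLeft L L ((↑) : κ → ι) ∘ₗ T) := by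
    refine (injective_iff_map_eq_zero _).2 fun v hv => hT ?_
    have hker : Submodule.span L (f '' κ) ≤ (Module.Dual.eval L V v).ker :=
      Submodule.span_le.2 <| Set.image_subset_iff.2 fun i hi => congrFun hv ⟨i, hi⟩
    ext i
    rw [map_zero]
    exact hker (hspan ⟨i, trivial, rfl⟩)
  have hcard : κ.card = Module.finrank L V := by
    apply le_antisymm
    · rw [← Subspace.dual_finrank_eq, ← Fintype.card_coe]
      exact LinearIndependent.fintype_card_le_finrank hindep
    · simpa using LinearMap.finrank_le_finrank_of_injective hinj
  refine ⟨κ, hcard, hinj, ?_⟩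
  exact (LinearMap.injective_iff_surjective_of_finrank_eq_finrank (by simp [hcard])).1 hinj

theorem exists_forall_apply_mem_of_eval_ne_zero {T : V →ₗ[L] ι → L} (hT : Function.Injective T)
    {P : MvPolynomial ι L} {v₀ : V} (hP : eval (T v₀) P ≠ 0) {C : Set L} (hC : C.Infinite) :
    ∃ (κ : Finset ι) (v : V), κ.card = Module.finrank L V ∧ eval (T v) P ≠ 0 ∧
      ∀ i ∈ κ, T v i ∈ C := by
  classical
  obtain ⟨κ, hcard, hκ⟩ := exists_finset_bijective_restrict hT
  let e : V ≃ₗ[L] (κ → L) := .ofBijective _ hκ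
  let Q : MvPolynomial κ L := bind₁ (T ∘ₗ e.symm.toLinearMap).toMatrix'.toMvPolynomial P
  have hQ : ∀ c, eval c Q = eval (T (e.symm c)) P := fun c => by
    have hlin : (fun i => eval c ((T ∘ₗ e.symm.toLinearMap).toMatrix'.toMvPolynomial i)) =
        T (e.symm c) := by
      ext i
      simp [Matrix.toMvPolynomial_eval_eq_apply]
    rw [← hlin]
    exact eval₂Hom_bind₁ (RingHom.id L) c _ P
  obtain ⟨c, hcC, hc⟩ : ∃ c ∈ Set.pi Set.univ fun _ : κ => C, eval c Q ≠ 0 := by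
    by_contra! hzero
    have hQ0 : Q = 0 := funext_set (fun _ => C) (fun _ => hC) fun c hc => by
      rw [hzero c hc, map_zero]
    apply hP
    rw [← e.symm_apply_apply v₀, ← hQ, hQ0, map_zero]
  refine ⟨κ, e.symm c, hcard, hQ c ▸ hc, fun i hi => ?_⟩
  have hi' : T (e.symm c) i = c ⟨i, hi⟩ := congrFun (e.apply_symm_apply c) ⟨i, hi⟩
  exact hi' ▸ hcC _ trivial

end Coordinates

section RationalCanonicalForm

open Polynomial Module

universe u

theorem exists_conj_eq_lmul_root {L : Type u} {V : Type*} [Field L] [AddCommGroup V] [Module L V]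
    [FiniteDimensional L V] (φ : End L V) :
    ∃ (ι : Type u) (_ : Fintype ι) (q : ι → L[X]) (_ : ∀ i, q i ≠ 0)
      (F : V ≃ₗ[L] ∀ i, AdjoinRoot (q i)),
      F.conj φ = Algebra.lmul L _ fun i => AdjoinRoot.root (q i) := by
  classical
  obtain ⟨ι, _, p, hp, e, ⟨E⟩⟩ := equiv_directSum_of_isTorsion
    (AEval.isTorsion_of_finiteDimensional L V φ)
  let E' : AEval' φ ≃ₗ[L[X]] ∀ i, L[X] ⧸ L[X] ∙ p i ^ e i :=
    E ≪≫ₗ DirectSum.linearEquivFunOnFintype L[X] ι _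
  let F : V ≃ₗ[L] ∀ i, AdjoinRoot (p i ^ e i) := AEval'.of φ ≪≫ₗ E'.restrictScalars L
  have hF : ∀ v i, F (φ v) i = AdjoinRoot.root (p i ^ e i) * F v i := fun v i => by
    have hX : E' (AEval'.of φ (φ v)) = (X : L[X]) • E' (AEval'.of φ v) := by
      rw [← AEval'.X_smul_of, map_smul]
    have hmul : ∀ f : AdjoinRoot (p i ^ e i),
        (X : L[X]) • (show L[X] ⧸ L[X] ∙ p i ^ e i from f) = AdjoinRoot.root (p i ^ e i) * f := by
      rintro ⟨f⟩
      rfl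
    exact (congrFun hX i).trans (hmul _)
  refine ⟨ι, inferInstance, fun i => p i ^ e i, fun i => pow_ne_zero _ (hp i).ne_zero, F, ?_⟩
  refine LinearMap.ext fun w => _root_.funext fun i => ?_
  rw [LinearEquiv.conj_apply_apply, hF, F.apply_symm_apply]
  rfl

theorem minpoly_dvd_charpoly_of_conj_eq_lmul {L V ι : Type*} {A : ι → Type*} [Field L]
    [AddCommGroup V] [Module L V] [FiniteDimensional L V] [∀ i, Ring (A i)] [∀ i, Algebra L (A i)]
    {φ : End L V} {F : V ≃ₗ[L] ∀ i, A i} {a : ∀ i, A i} (hF : F.conj φ = Algebra.lmul L _ a)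
    (i : ι) : minpoly L (a i) ∣ φ.charpoly := by
  have : FiniteDimensional L (∀ i, A i) := F.finiteDimensional
  have hlmul : Algebra.lmul L _ (aeval a φ.charpoly) = 0 := by
    rw [← aeval_algHom_apply, ← hF, ← F.charpoly_conj, LinearMap.aeval_self_charpoly]
  have hzero : aeval a φ.charpoly = 0 := Algebra.lmul_injective (hlmul.trans (map_zero _).symm)
  exact minpoly.dvd _ _ ((aeval_algHom_apply (Pi.evalAlgHom L A i) a _).trans (by simp [hzero]))

theorem leftMulMatrix_pi_basis {L ι : Type*} {A κ : ι → Type*} [CommRing L] [Fintype ι]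
    [DecidableEq ι] [∀ i, Fintype (κ i)] [∀ i, DecidableEq (κ i)]
    [∀ i, Ring (A i)] [∀ i, Algebra L (A i)]
    (b : ∀ i, Basis (κ i) L (A i)) (a : ∀ i, A i) :
    Algebra.leftMulMatrix (Pi.basis b) a =
      Matrix.blockDiagonal' fun i => Algebra.leftMulMatrix (b i) (a i) := by
  ext ⟨i, s⟩ ⟨j, t⟩
  rcases eq_or_ne i j with rfl | hij
  · simp [Algebra.leftMulMatrix_eq_repr_mul]
  · simp [Algebra.leftMulMatrix_eq_repr_mul, Matrix.blockDiagonal'_apply_ne _ _ _ hij, hij]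

variable {k L : Type*} [Field k] [Field L] [Algebra k L]

theorem leftMulMatrix_powerBasis_mem_matrix {A : Type*} [Ring A] [Algebra L A]
    (pb : PowerBasis L A) (S : Subalgebra k L) (hS : ∀ i, (minpoly L pb.gen).coeff i ∈ S) :
    Algebra.leftMulMatrix pb.basis pb.gen ∈ S.matrix := fun i j => by
  rw [pb.leftMulMatrix, Matrix.of_apply, pb.minpolyGen_eq]
  split_ifs
  exacts [S.neg_mem (hS _), S.one_mem, S.zero_mem]

theorem blockDiagonal'_mem_matrix {ι : Type*} {κ : ι → Type*} [DecidableEq ι] [Fintype ι]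
    [∀ i, Fintype (κ i)] [∀ i, DecidableEq (κ i)] {S : Subalgebra k L}
    {d : ∀ i, Matrix (κ i) (κ i) L} (hd : ∀ i, d i ∈ S.matrix) :
    Matrix.blockDiagonal' d ∈ S.matrix := by
  rintro ⟨i, s⟩ ⟨j, t⟩
  rcases eq_or_ne i j with rfl | hij
  · rw [Matrix.blockDiagonal'_apply_eq]
    exact hd i s t
  · rw [Matrix.blockDiagonal'_apply_ne _ _ _ hij]
    exact S.zero_mem

variable {m : Type*} [Fintype m] [DecidableEq m]

theorem exists_basis_toMatrix_mem_matrix {V : Type*} [AddCommGroup V] [Module L V]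
    [FiniteDimensional L V] (e : Basis m L V) (φ : End L V) :
    ∃ b : Basis m L V, ∀ (M : IntermediateField k L) [IsIntegrallyClosedIn M L],
      (∀ i, φ.charpoly.coeff i ∈ M) → LinearMap.toMatrix b b φ ∈ M.toSubalgebra.matrix := by
  classical
  obtain ⟨ι, _, q, hq, F, hF⟩ := exists_conj_eq_lmul_root φ
  let pb : ∀ i, PowerBasis L (AdjoinRoot (q i)) := fun i => AdjoinRoot.powerBasis (hq i)
  let c : Basis (Σ i, Fin (pb i).dim) L V := (Pi.basis fun i => (pb i).basis).map F.symm
  have hgen : (fun i => AdjoinRoot.root (q i)) = fun i => (pb i).gen := by simp [pb]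
  rw [hgen] at hF
  have hc : LinearMap.toMatrix c c φ =
      Matrix.blockDiagonal' fun i => Algebra.leftMulMatrix (pb i).basis (pb i).gen := by
    rw [← leftMulMatrix_pi_basis, Algebra.leftMulMatrix_apply, ← hF]
    ext s t
    simp [c, LinearMap.toMatrix_apply]
  refine ⟨c.reindex (c.indexEquiv e), fun M _ hM => ?_⟩
  have hblocks : LinearMap.toMatrix c c φ ∈ M.toSubalgebra.matrix := by
    rw [hc]
    refine blockDiagonal'_mem_matrix fun i => leftMulMatrix_powerBasis_mem_matrix _ _ ?_
    exact coeff_mem_of_dvd φ.charpoly_monic (minpoly.monic (pb i).isIntegral_gen)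
      (minpoly_dvd_charpoly_of_conj_eq_lmul hF i) hM
  intro s t
  simpa [LinearMap.toMatrix_apply] using hblocks ((c.indexEquiv e).symm s) ((c.indexEquiv e).symm t)

theorem exists_similar_mem_matrix (x : Matrix m m L) :
    ∃ J g : Matrix m m L, IsUnit g.det ∧ x * g = g * J ∧
      ∀ (M : IntermediateField k L) [IsIntegrallyClosedIn M L],
        (∀ i, x.charpoly.coeff i ∈ M) → J ∈ M.toSubalgebra.matrix := by
  let e : Basis m L (m → L) := Pi.basisFun L m
  obtain ⟨b, hb⟩ := exists_basis_toMatrix_mem_matrix (k := k) e (Matrix.toLin' x)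
  refine ⟨LinearMap.toMatrix b b (Matrix.toLin' x), e.toMatrix b,
    Matrix.isUnit_det_of_right_inverse (e.toMatrix_mul_toMatrix_flip b), ?_, fun M _ hM => ?_⟩
  · rw [basis_toMatrix_mul_linearMap_toMatrix, ← linearMap_toMatrix_mul_basis_toMatrix b e e]
    simp [e, LinearMap.toMatrix_eq_toMatrix']
  · exact hb M (by rwa [Matrix.charpoly_toLin'])

end RationalCanonicalForm

section Intertwiners

open Module

/-- The entries of the matrices in a subspace, as a linear map. -/
def entries {L m : Type*} [Semiring L] (W : Submodule L (Matrix m m L)) : W →ₗ[L] m × m → L :=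
  LinearMap.pi fun p => Matrix.entryLinearMap L L p.1 p.2 ∘ₗ W.subtype

theorem entries_injective {L m : Type*} [Semiring L] (W : Submodule L (Matrix m m L)) :
    Function.Injective (entries W) := fun _ _ h =>
  Subtype.ext (Matrix.ext fun i j => congrFun h (i, j))

variable {L m : Type*} [Fintype m] [DecidableEq m]

/-- The space of matrices `g` with `a * g = g * b`. The centralizer of `a` is `intertwiners a a`. -/
def intertwiners [CommRing L] (a b : Matrix m m L) : Submodule L (Matrix m m L) :=
  LinearMap.ker (LinearMap.mulLeft L a - LinearMap.mulRight L b)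

theorem mem_intertwiners [CommRing L] {a b g : Matrix m m L} :
    g ∈ intertwiners a b ↔ a * g = g * b := by
  rw [intertwiners, LinearMap.mem_ker, LinearMap.sub_apply, sub_eq_zero, LinearMap.mulLeft_apply,
    LinearMap.mulRight_apply]

variable [Field L]

theorem finrank_intertwiners_self_le {a b g : Matrix m m L} (hg : IsUnit g.det)
    (hgab : g ∈ intertwiners a b) :
    finrank L (intertwiners a a) ≤ finrank L (intertwiners a b) := by
  rw [mem_intertwiners] at hgab
  refine LinearMap.finrank_le_finrank_of_injective
    (f := (LinearMap.mulRight L g).restrict fun h hh => ?_) fun h₁ h₂ h => Subtype.ext ?_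
  · rw [mem_intertwiners] at hh ⊢
    rw [LinearMap.mulRight_apply, ← mul_assoc, hh, mul_assoc, mul_assoc, hgab]
  · exact ((Matrix.isUnit_iff_isUnit_det g).2 hg).mul_left_injective (congrArg Subtype.val h)

theorem mem_matrix_of_entries_mem {k : Type*} [Field k] [Algebra k L] {M : IntermediateField k L}
    {a b : Matrix m m L} (ha : a ∈ M.toSubalgebra.matrix) (hb : b ∈ M.toSubalgebra.matrix)
    {κ : Finset (m × m)} (hκ : Function.Injective
      (LinearMap.funLeft L L ((↑) : κ → m × m) ∘ₗ entries (intertwiners a b)))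
    (u : intertwiners a b) (hu : ∀ i : κ, entries (intertwiners a b) u i ∈ M) :
    (u : Matrix m m L) ∈ M.toSubalgebra.matrix := by
  -- Applying an `M`-linear retraction `r` of `L` onto `M` entrywise preserves `intertwiners a b`.
  obtain ⟨r, hr⟩ := (Algebra.linearMap M L).exists_leftInverse_of_injective
    (LinearMap.ker_eq_bot.2 (algebraMap M L).injective)
  have hrM : ∀ c (hc : c ∈ M), r c = ⟨c, hc⟩ := fun c hc => DFunLike.congr_fun hr ⟨c, hc⟩
  have hmul_left : ∀ c ∈ M, ∀ z, (r (c * z) : L) = c * r z := fun c hc z =>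
    congrArg Subtype.val (r.map_smul ⟨c, hc⟩ z)
  have hmul_right : ∀ c ∈ M, ∀ z, (r (z * c) : L) = r z * c := fun c hc z => by
    rw [mul_comm, hmul_left c hc, mul_comm]
  let w : Matrix m m L := Matrix.of fun i j => r (u.1 i j)
  have hw : w ∈ intertwiners a b := by
    rw [mem_intertwiners]
    ext i j
    have hij := congrArg (fun z : L => (r z : L)) (congrFun₂ (mem_intertwiners.1 u.2) i j)
    simpa [w, Matrix.mul_apply, hmul_left _ (ha _ _), hmul_right _ (hb _ _)] using hij
  have huw : u = ⟨w, hw⟩ := hκ <| _root_.funext fun i => (congrArg Subtype.val (hrM _ (hu i))).symm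
  rw [huw]
  exact fun i j => (r (u.1 i j)).2

end Intertwiners

section CommutingPairs

open Module

variable {k L m : Type*} [Field k] [Field L] [Algebra k L] [Fintype m] [DecidableEq m]

theorem exists_finset_mem_matrix_of_charpoly_coeff_mem [IsAlgClosed L] (x : Matrix m m L) :
    ∃ t : Finset L, t.card + finrank L (intertwiners x x) ≤ Fintype.card m ^ 2 ∧
      ∀ (M : IntermediateField k L) [IsIntegrallyClosedIn M L],
        (∀ i, x.charpoly.coeff i ∈ M) → (t : Set L) ⊆ M → x ∈ M.toSubalgebra.matrix := by
  classical
  obtain ⟨J, g₀, hg₀, hxg₀, hJ⟩ := exists_similar_mem_matrix (k := k) x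
  rw [← mem_intertwiners] at hxg₀
  have hdet : ∀ g : intertwiners x J,
      eval (entries _ g) (Matrix.mvPolynomialX m m L).det = (g : Matrix m m L).det := fun g => by
    rw [RingHom.map_det]
    exact congrArg _ (Matrix.mvPolynomialX_mapMatrix_eval (g : Matrix m m L))
  have : IsAlgClosed (algebraicClosure k L) := IsAlgClosure.isAlgClosed k
  have hinf : (algebraicClosure k L : Set L).Infinite :=
    Set.infinite_coe_iff.1 (IsAlgClosed.instInfinite (K := algebraicClosure k L))
  obtain ⟨κ, g, hκ, hg, hgκ⟩ := exists_forall_apply_mem_of_eval_ne_zero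
    (entries_injective (intertwiners x J)) (v₀ := ⟨g₀, hxg₀⟩)
    (P := (Matrix.mvPolynomialX m m L).det) (by rw [hdet]; exact hg₀.ne_zero) hinf
  rw [hdet] at hg
  refine ⟨κᶜ.image (entries _ g), ?_, fun M _ hM ht => ?_⟩
  · calc _ ≤ κᶜ.card + κ.card := add_le_add Finset.card_image_le
          (hκ ▸ finrank_intertwiners_self_le hg₀ hxg₀)
      _ = Fintype.card m ^ 2 := by rw [Finset.card_compl_add_card, Fintype.card_prod, sq]
  · have hgM : (g : Matrix m m L) ∈ M.toSubalgebra.matrix := fun i j => by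
      by_cases hij : (i, j) ∈ κ
      · exact mem_of_isIntegral (IsIntegral.tower_top (hgκ _ hij))
      · exact ht (Finset.mem_image_of_mem (entries _ g) (Finset.mem_compl.2 hij))
    have hx : x = g * J * (g : Matrix m m L)⁻¹ := by
      rw [← mem_intertwiners.1 g.2, Matrix.mul_nonsing_inv_cancel_right _ _ hg.isUnit]
    rw [hx]
    exact mul_mem (mul_mem hgM (hJ M hM)) (inv_mem_matrix hgM)

theorem exists_finset_mem_matrix_of_commute [Nonempty m] {x y : Matrix m m L} (hxy : Commute x y)
    (hy : y.det ≠ 0) :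
    ∃ t : Finset L, t.card + 1 ≤ finrank L (intertwiners x x) ∧
      ∀ (M : IntermediateField k L) [IsIntegrallyClosedIn M L],
        x ∈ M.toSubalgebra.matrix → y.det ∈ M → (t : Set L) ⊆ M → y ∈ M.toSubalgebra.matrix := by
  classical
  obtain ⟨κ, hκ, hinj, -⟩ := exists_finset_bijective_restrict (entries_injective (intertwiners x x))
  let u : intertwiners x x := ⟨y, mem_intertwiners.2 hxy⟩
  obtain ⟨i₀, hi₀⟩ : ∃ i₀ : κ, entries _ u i₀ ≠ 0 := by
    by_contra! hzero
    have hu : u = 0 := hinj (by rw [map_zero]; exact _root_.funext hzero)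
    exact hy ((congrArg Matrix.det (congrArg Subtype.val hu)).trans Matrix.det_zero)
  -- Dividing `y` by its entry `c` saves one parameter: `c⁻¹` is a root of `det (c⁻¹ • y) / det y`.
  set c : L := entries _ u i₀
  refine ⟨(κ.erase i₀).image fun i => c⁻¹ * entries _ u i, ?_, fun M _ hx hdet ht => ?_⟩
  · rw [← hκ, ← Finset.card_erase_add_one i₀.2]
    exact Nat.add_le_add_right Finset.card_image_le 1
  · have hcy : c⁻¹ • y ∈ M.toSubalgebra.matrix := by
      refine mem_matrix_of_entries_mem hx hx hinj (c⁻¹ • u) fun i => ?_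
      by_cases hi : i = i₀
      · rw [map_smul, hi, Pi.smul_apply, smul_eq_mul, inv_mul_cancel₀ hi₀]
        exact M.one_mem
      · exact ht (Finset.mem_image_of_mem (fun i => c⁻¹ * entries _ u i)
          (Finset.mem_erase.2 ⟨Subtype.coe_ne_coe.2 hi, i.2⟩))
    have hc : c⁻¹ ∈ M := by
      apply mem_of_pow_mem (Fintype.card_ne_zero (α := m))
      rw [eq_div_of_mul_eq hy (Matrix.det_smul y c⁻¹).symm]
      exact M.div_mem (det_mem_of_mem_matrix hcy) hdet
    exact mem_matrix_of_smul_mem (inv_ne_zero hi₀) hc hcy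

theorem charpoly_coeff_mem_of_det_mem {x : Matrix m m L} {S : Subalgebra k L} (hdet : x.det ∈ S)
    (hS : ∀ i ∈ Finset.Ioo 0 (Fintype.card m), x.charpoly.coeff i ∈ S) (i : ℕ) :
    x.charpoly.coeff i ∈ S := by
  rcases eq_or_ne i 0 with rfl | h0
  · rw [x.det_eq_sign_charpoly_coeff] at hdet
    have hsign : x.charpoly.coeff 0 =
        (-1) ^ Fintype.card m * ((-1) ^ Fintype.card m * x.charpoly.coeff 0) := by
      rw [← mul_assoc, ← mul_pow]
      simp
    rw [hsign]
    exact S.mul_mem (S.pow_mem (S.neg_mem S.one_mem) _) hdet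
  rcases lt_trichotomy i (Fintype.card m) with hlt | rfl | hgt
  · exact hS i (Finset.mem_Ioo.2 ⟨h0.bot_lt, hlt⟩)
  · have hlead := x.charpoly_monic.coeff_natDegree
    rw [x.charpoly_natDegree_eq_dim] at hlead
    exact hlead ▸ S.one_mem
  · rw [Polynomial.coeff_eq_zero_of_natDegree_lt (by rwa [x.charpoly_natDegree_eq_dim])]
    exact S.zero_mem

theorem exists_finset_card_add_two_le_of_commute [IsAlgClosed L] [Nonempty m] {x y : Matrix m m L}
    (hxy : Commute x y) (hx : x.det = 1) (hy : y.det = 1) :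
    ∃ s : Finset L, s.card + 2 ≤ Fintype.card m ^ 2 + Fintype.card m ∧
      x ∈ (algClosureAdjoin k (s : Set L)).toSubalgebra.matrix ∧
      y ∈ (algClosureAdjoin k (s : Set L)).toSubalgebra.matrix := by
  classical
  obtain ⟨t, ht, hxM⟩ := exists_finset_mem_matrix_of_charpoly_coeff_mem (k := k) x
  obtain ⟨t', ht', hyM⟩ := exists_finset_mem_matrix_of_commute (k := k) hxy (hy ▸ one_ne_zero)
  let p : Finset L := (Finset.Ioo 0 (Fintype.card m)).image x.charpoly.coeff
  have hp : p.card + 1 ≤ Fintype.card m :=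
    (Nat.add_le_add_right (Finset.card_image_le.trans_eq (Nat.card_Ioo _ _)) 1).trans_eq
      (Nat.sub_add_cancel Fintype.card_pos)
  let s := p ∪ t ∪ t'
  have hs : (s : Set L) ⊆ algClosureAdjoin k (s : Set L) := subset_algClosureAdjoin _
  have hxs : x ∈ (algClosureAdjoin k (s : Set L)).toSubalgebra.matrix :=
    hxM _ (charpoly_coeff_mem_of_det_mem (hx ▸ one_mem _) fun i hi => hs <| Finset.mem_coe.2 <|
      Finset.mem_union_left _ <| Finset.mem_union_left _ <| Finset.mem_image_of_mem _ hi)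
      (.trans (fun z hz => by simp_all [s]) hs)
  refine ⟨s, ?_, hxs, hyM _ hxs (hy ▸ one_mem _) (.trans (fun z hz => by simp_all [s]) hs)⟩
  have hcard := (Finset.card_union_le (p ∪ t) t').trans
    (Nat.add_le_add_right (Finset.card_union_le p t) _)
  lia

end CommutingPairs

section GenericCommutingPair

open Matrix

section CommRing

theorem aeval_comp_X {σ k A : Type*} [CommSemiring k] [CommSemiring A] [Algebra k A] (w : σ → A) :
    aeval (R := k) w ∘ X = w :=
  _root_.funext fun _ => aeval_X _ _

variable {A : Type*} [CommRing A] {n : ℕ}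

/-- The Krylov matrix of `x` and the all-ones vector, with columns `x ^ j *ᵥ 1` for `j < n`. -/
def krylov (x : Matrix (Fin n) (Fin n) A) : Matrix (Fin n) (Fin n) A :=
  of fun i j => (x ^ (j : ℕ) *ᵥ 1) i

/-- The first matrix of the commuting pair with parameters `w`, whose entries are free. -/
def paramFst (w : (Fin n × Fin n) ⊕ Fin n → A) : Matrix (Fin n) (Fin n) A :=
  of fun i j => w (Sum.inl (i, j))

/-- The second matrix of the commuting pair with parameters `w`: the polynomial in `paramFst w` of
degree less than `n` whose coefficients are the remaining parameters. -/
def paramSnd (w : (Fin n × Fin n) ⊕ Fin n → A) : Matrix (Fin n) (Fin n) A :=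
  ∑ j, w (Sum.inr j) • paramFst w ^ (j : ℕ)

theorem commute_paramFst_paramSnd (w : (Fin n × Fin n) ⊕ Fin n → A) :
    Commute (paramFst w) (paramSnd w) :=
  Commute.sum_right _ _ _ fun _ _ => ((Commute.refl _).pow_right _).smul_right _

theorem krylov_diagonal (d : Fin n → A) : krylov (diagonal d) = vandermonde d := by
  ext i j
  simp [krylov, diagonal_pow, mulVec_diagonal, vandermonde_apply]

theorem krylov_paramFst_mulVec (w : (Fin n × Fin n) ⊕ Fin n → A) :
    krylov (paramFst w) *ᵥ (w ∘ Sum.inr) = paramSnd w *ᵥ 1 := by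
  simp_rw [paramSnd, sum_mulVec, smul_mulVec]
  ext i
  simp [krylov, mulVec, dotProduct, mul_comm]

variable {k B : Type*} [CommRing k] [CommRing B] [Algebra k A] [Algebra k B]

theorem mulVec_one_mem {m : Type*} [Fintype m] [DecidableEq m] {S : Subalgebra k A}
    {x : Matrix m m A} (hx : x ∈ S.matrix) (i : m) : (x *ᵥ 1) i ∈ S :=
  sum_mem (t := Finset.univ) fun j _ => S.mul_mem (hx i j) S.one_mem

theorem mapMatrix_krylov (f : A →ₐ[k] B) (x : Matrix (Fin n) (Fin n) A) :
    f.mapMatrix (krylov x) = krylov (f.mapMatrix x) := by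
  ext i j
  simp only [krylov, ← map_pow]
  simp [mulVec, dotProduct]

theorem mapMatrix_paramFst (f : A →ₐ[k] B) (w : (Fin n × Fin n) ⊕ Fin n → A) :
    f.mapMatrix (paramFst w) = paramFst (f ∘ w) :=
  rfl

theorem mapMatrix_paramSnd (f : A →ₐ[k] B) (w : (Fin n × Fin n) ⊕ Fin n → A) :
    f.mapMatrix (paramSnd w) = paramSnd (f ∘ w) := by
  simp only [paramSnd, ← mapMatrix_paramFst, ← map_pow, map_sum]
  refine Finset.sum_congr rfl fun j _ => ?_
  ext
  simp

theorem det_ne_zero_of_algebraicIndependent {σ m : Type*} [Fintype m] [DecidableEq m] {w : σ → B}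
    (hw : AlgebraicIndependent k w) {G : Matrix m m (MvPolynomial σ k)} (u : σ → A)
    (hu : ((aeval u).mapMatrix G).det ≠ 0) : ((aeval w).mapMatrix G).det ≠ 0 := by
  rw [← AlgHom.map_det] at hu ⊢
  exact (map_ne_zero_iff _ hw).2 fun hG => hu (by rw [hG, map_zero])

end CommRing

section Field

variable {k L m : Type*} [Field k] [Field L] [Algebra k L] [Fintype m] [DecidableEq m]

theorem inr_mem_of_paramSnd_mem_matrix {n : ℕ} {M : IntermediateField k L}
    {w : (Fin n × Fin n) ⊕ Fin n → L} (hdet : (krylov (paramFst w)).det ≠ 0)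
    (hfst : paramFst w ∈ M.toSubalgebra.matrix) (hsnd : paramSnd w ∈ M.toSubalgebra.matrix)
    (j : Fin n) : w (Sum.inr j) ∈ M := by
  have hw : w ∘ Sum.inr = (krylov (paramFst w))⁻¹ *ᵥ (paramSnd w *ᵥ 1) := by
    rw [← krylov_paramFst_mulVec, mulVec_mulVec, nonsing_inv_mul _ hdet.isUnit, one_mulVec]
  have hkrylov : krylov (paramFst w) ∈ M.toSubalgebra.matrix := fun i j =>
    mulVec_one_mem (pow_mem hfst _) i
  rw [← Function.comp_apply (f := w), hw]
  exact sum_mem (t := Finset.univ) fun i _ =>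
    M.mul_mem (inv_mem_matrix hkrylov j i) (mulVec_one_mem hsnd i)

theorem exists_smul_det_eq_one [IsAlgClosed L] [Nonempty m] {x : Matrix m m L} (hx : x.det ≠ 0) :
    ∃ c : L, c ≠ 0 ∧ (c • x).det = 1 := by
  obtain ⟨c, hc⟩ := IsAlgClosed.exists_pow_nat_eq x.det⁻¹ (Fintype.card_pos (α := m))
  have hdet : (c • x).det = 1 := by rw [det_smul, hc, inv_mul_cancel₀ hx]
  refine ⟨c, ?_, hdet⟩
  rintro rfl
  simp at hdet

variable (k) in
/-- The parameters of the pair consisting of a diagonal matrix of indeterminates and the identity.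
Generic determinants are shown to be nonzero by specializing here. -/
noncomputable def diagonalParam (n : ℕ) : (Fin n × Fin n) ⊕ Fin n → MvPolynomial (Fin n) k :=
  Sum.elim (fun p => diagonal X p.1 p.2) fun j => if (j : ℕ) = 0 then 1 else 0

theorem paramFst_diagonalParam (n : ℕ) : paramFst (diagonalParam k n) = diagonal X :=
  rfl

theorem paramSnd_diagonalParam (n : ℕ) [NeZero n] : paramSnd (diagonalParam k n) = 1 := by
  simp [paramSnd, diagonalParam, ite_smul, Fin.val_eq_zero_iff]

variable {n : ℕ} {w : (Fin n × Fin n) ⊕ Fin n → L}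

theorem det_paramFst_ne_zero (hw : AlgebraicIndependent k w) : (paramFst w).det ≠ 0 := by
  have hdet := det_ne_zero_of_algebraicIndependent hw (G := paramFst X) (diagonalParam k n)
  simp_rw [mapMatrix_paramFst, aeval_comp_X, paramFst_diagonalParam, det_diagonal] at hdet
  exact hdet (Finset.prod_ne_zero_iff.2 fun i _ => X_ne_zero i)

theorem det_paramSnd_ne_zero [NeZero n] (hw : AlgebraicIndependent k w) :
    (paramSnd w).det ≠ 0 := by
  have hdet := det_ne_zero_of_algebraicIndependent hw (G := paramSnd X) (diagonalParam k n)
  simp_rw [mapMatrix_paramSnd, aeval_comp_X, paramSnd_diagonalParam, det_one] at hdet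
  exact hdet one_ne_zero

theorem det_krylov_paramFst_ne_zero (hw : AlgebraicIndependent k w) :
    (krylov (paramFst w)).det ≠ 0 := by
  have hdet := det_ne_zero_of_algebraicIndependent hw (G := krylov (paramFst X)) (diagonalParam k n)
  simp_rw [mapMatrix_krylov, mapMatrix_paramFst, aeval_comp_X, paramFst_diagonalParam,
    krylov_diagonal] at hdet
  exact hdet (det_vandermonde_ne_zero_iff.2 X_injective)

theorem exists_commute_forall_le_card_add_two [IsAlgClosed L] [NeZero n]
    (hw : AlgebraicIndependent k w) :
    ∃ x y : Matrix (Fin n) (Fin n) L, Commute x y ∧ x.det = 1 ∧ y.det = 1 ∧ ∀ s : Finset L,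
      x ∈ (algClosureAdjoin k (s : Set L)).toSubalgebra.matrix →
      y ∈ (algClosureAdjoin k (s : Set L)).toSubalgebra.matrix → n ^ 2 + n ≤ s.card + 2 := by
  classical
  obtain ⟨a, ha, hdetx⟩ := exists_smul_det_eq_one (det_paramFst_ne_zero hw)
  obtain ⟨b, hb, hdety⟩ := exists_smul_det_eq_one (det_paramSnd_ne_zero hw)
  refine ⟨a • paramFst w, b • paramSnd w,
    ((commute_paramFst_paramSnd w).smul_left a).smul_right b, hdetx, hdety, fun s hx hy => ?_⟩
  let s' : Finset L := insert a (insert b s)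
  let M := algClosureAdjoin k (s' : Set L)
  have hss' : algClosureAdjoin k (s : Set L) ≤ M := algClosureAdjoin_le fun z hz =>
    subset_algClosureAdjoin _ (by simp_all [s'])
  have hfst : paramFst w ∈ M.toSubalgebra.matrix := mem_matrix_of_smul_mem ha
    (subset_algClosureAdjoin _ (by simp [s'])) fun i j => hss' (hx i j)
  have hsnd : paramSnd w ∈ M.toSubalgebra.matrix := mem_matrix_of_smul_mem hb
    (subset_algClosureAdjoin _ (by simp [s'])) fun i j => hss' (hy i j)
  have hwM : ∀ i, w i ∈ M := Sum.rec (fun p => hfst p.1 p.2)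
    (inr_mem_of_paramSnd_mem_matrix (det_krylov_paramFst_ne_zero hw) hfst hsnd)
  calc n ^ 2 + n = Fintype.card ((Fin n × Fin n) ⊕ Fin n) := by simp [sq]
    _ ≤ s'.card := card_le_card_of_forall_mem_algClosureAdjoin hw hwM
    _ ≤ s.card + 2 := (Finset.card_insert_le _ _).trans
      (Nat.add_le_add_right (Finset.card_insert_le _ _) 1)

end Field

end GenericCommutingPair

section CoordinateRing

section CommutingIdeal

variable (k m : Type*) [CommRing k]

/-- The matrix of the first `m × m` indeterminates: `genX` over an arbitrary coefficient ring and
index type. -/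
noncomputable def genericLeft : Matrix m m (MvPolynomial ((m × m) ⊕ (m × m)) k) :=
  Matrix.of fun i j => X (Sum.inl (i, j))

/-- The matrix of the last `m × m` indeterminates: `genY` over an arbitrary coefficient ring and
index type. -/
noncomputable def genericRight : Matrix m m (MvPolynomial ((m × m) ⊕ (m × m)) k) :=
  Matrix.of fun i j => X (Sum.inr (i, j))

variable [Fintype m] [DecidableEq m]

/-- The ideal generated by the equations of the variety of commuting pairs of matrices of
determinant one. -/
noncomputable def commutingIdeal : Ideal (MvPolynomial ((m × m) ⊕ (m × m)) k) :=
  Ideal.span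
    ({p | ∃ i j, p = (genericLeft k m * genericRight k m -
        genericRight k m * genericLeft k m) i j} ∪
      {(genericLeft k m).det - 1, (genericRight k m).det - 1})

variable {k m}

theorem commutingIdeal_le_ker_iff {A : Type*} [CommRing A] [Algebra k A]
    (f : MvPolynomial ((m × m) ⊕ (m × m)) k →ₐ[k] A) :
    commutingIdeal k m ≤ RingHom.ker f ↔
      Commute (f.mapMatrix (genericLeft k m)) (f.mapMatrix (genericRight k m)) ∧
        (f.mapMatrix (genericLeft k m)).det = 1 ∧ (f.mapMatrix (genericRight k m)).det = 1 := by
  have hcomm : {p | ∃ i j, p = (genericLeft k m * genericRight k m -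
      genericRight k m * genericLeft k m) i j} ⊆ (RingHom.ker f : Set _) ↔
      Commute (f.mapMatrix (genericLeft k m)) (f.mapMatrix (genericRight k m)) := by
    rw [commute_iff_eq, ← sub_eq_zero, ← map_mul, ← map_mul, ← map_sub, ← Matrix.ext_iff]
    exact ⟨fun h i j => h ⟨i, j, rfl⟩, by rintro h _ ⟨i, j, rfl⟩; exact h i j⟩
  have hdet : ∀ G : Matrix m m (MvPolynomial ((m × m) ⊕ (m × m)) k),
      G.det - 1 ∈ RingHom.ker f ↔ (f.mapMatrix G).det = 1 := fun G => by
    rw [RingHom.mem_ker, map_sub, map_one, sub_eq_zero, AlgHom.map_det]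
  rw [commutingIdeal, Ideal.span_le, Set.union_subset_iff, hcomm, Set.pair_subset_iff,
    SetLike.mem_coe, SetLike.mem_coe, hdet, hdet]

theorem exists_algHom_quotient_commutingIdeal {A : Type*} [CommRing A] [Algebra k A]
    {x y : Matrix m m A} (hxy : Commute x y) (hx : x.det = 1) (hy : y.det = 1) :
    ∃ φ : (MvPolynomial ((m × m) ⊕ (m × m)) k ⧸ commutingIdeal k m) →ₐ[k] A,
      ∀ i j, x i j ∈ Set.range φ ∧ y i j ∈ Set.range φ := by
  let f : MvPolynomial ((m × m) ⊕ (m × m)) k →ₐ[k] A :=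
    aeval (Sum.elim (fun p => x p.1 p.2) fun p => y p.1 p.2)
  have hfx : f.mapMatrix (genericLeft k m) = x := by
    ext i j
    simp [f, genericLeft]
  have hfy : f.mapMatrix (genericRight k m) = y := by
    ext i j
    simp [f, genericRight]
  have hker : commutingIdeal k m ≤ RingHom.ker f := by
    rw [commutingIdeal_le_ker_iff, hfx, hfy]
    exact ⟨hxy, hx, hy⟩
  exact ⟨Ideal.Quotient.liftₐ _ f hker, fun i j =>
    ⟨⟨Ideal.Quotient.mk _ (genericLeft k m i j), congrFun₂ hfx i j⟩,
      ⟨Ideal.Quotient.mk _ (genericRight k m i j), congrFun₂ hfy i j⟩⟩⟩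

theorem exists_commute_forall_apply_mem {A : Type*} [CommRing A] [Algebra k A]
    (φ : (MvPolynomial ((m × m) ⊕ (m × m)) k ⧸ commutingIdeal k m) →ₐ[k] A) :
    ∃ x y : Matrix m m A, Commute x y ∧ x.det = 1 ∧ y.det = 1 ∧
      ∀ S : Subalgebra k A, x ∈ S.matrix → y ∈ S.matrix → ∀ r, φ r ∈ S := by
  let f := φ.comp (Ideal.Quotient.mkₐ k (commutingIdeal k m))
  have hker : commutingIdeal k m ≤ RingHom.ker f := fun p hp =>
    (congrArg φ (Ideal.Quotient.eq_zero_iff_mem.2 hp)).trans (map_zero φ)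
  obtain ⟨hxy, hx, hy⟩ := (commutingIdeal_le_ker_iff f).1 hker
  refine ⟨_, _, hxy, hx, hy, fun S hxS hyS r => ?_⟩
  obtain ⟨p, rfl⟩ := Ideal.Quotient.mk_surjective r
  exact mem_of_forall_X_mem f S (Sum.rec (fun q => hxS q.1 q.2) fun q => hyS q.1 q.2) p

end CommutingIdeal

variable (k : Type*) [Field k]

theorem ringKrullDim_quotient_commutingIdeal_le (m : Type*) [Fintype m] [DecidableEq m]
    [Nonempty m] :
    ringKrullDim (MvPolynomial ((m × m) ⊕ (m × m)) k ⧸ commutingIdeal k m) ≤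
      (Fintype.card m ^ 2 + Fintype.card m - 2 : ℕ) := by
  refine ringKrullDim_le_of_forall_algHom k fun L _ _ _ φ => ?_
  obtain ⟨x, y, hxy, hx, hy, hφ⟩ := exists_commute_forall_apply_mem φ
  obtain ⟨s, hs, hxs, hys⟩ := exists_finset_card_add_two_le_of_commute (k := k) hxy hx hy
  exact ⟨s, Nat.le_sub_of_add_le hs, hφ _ hxs hys⟩

theorem le_ringKrullDim_quotient_commutingIdeal (n : ℕ) [NeZero n] :
    (n ^ 2 + n - 2 : ℕ) ≤ ringKrullDim
      (MvPolynomial ((Fin n × Fin n) ⊕ (Fin n × Fin n)) k ⧸ commutingIdeal k (Fin n)) := by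
  obtain ⟨L, _, _, _, ψ, hψ⟩ := exists_algHom_isAlgClosed_ker_eq k
    (⊥ : Ideal (MvPolynomial ((Fin n × Fin n) ⊕ Fin n) k))
  have hindep := (algebraicIndependent_X _ k).map' ((RingHom.injective_iff_ker_eq_bot ψ).2 hψ)
  obtain ⟨x, y, hxy, hx, hy, hcard⟩ := exists_commute_forall_le_card_add_two hindep
  obtain ⟨φ, hφ⟩ := exists_algHom_quotient_commutingIdeal (k := k) hxy hx hy
  obtain ⟨s, hs, hφs⟩ := exists_finset_card_le_ringKrullDim k φ
  have hrange := Set.range_subset_iff.2 hφs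
  have hle : n ^ 2 + n - 2 ≤ s.card := Nat.sub_le_of_le_add
    (hcard s (fun i j => hrange (hφ i j).1) fun i j => hrange (hφ i j).2)
  exact (Nat.cast_le.2 hle).trans hs

theorem krullDim_commutingVariety_SL_general (n : ℕ) (hn : 1 ≤ n) :
    ringKrullDim
      (MvPolynomial ((Fin n × Fin n) ⊕ (Fin n × Fin n)) k ⧸ commutingIdeal k (Fin n)) =
    (n ^ 2 + n - 2 : ℕ) := by
  have : NeZero n := ⟨Nat.one_le_iff_ne_zero.1 hn⟩
  refine le_antisymm ?_ (le_ringKrullDim_quotient_commutingIdeal k n)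
  simpa only [Fintype.card_fin] using ringKrullDim_quotient_commutingIdeal_le k (Fin n)

end CoordinateRing

/-- The coordinate ring of the commuting variety `C(SL_n)` has Krull dimension
`n² + n - 2 = (n² - 1) + (n - 1)`. -/
theorem krullDim_commutingVariety_SL (n : ℕ) (hn : 1 ≤ n) :
    ringKrullDim
      ((MvPolynomial ((Fin n × Fin n) ⊕ (Fin n × Fin n)) ℂ) ⧸
        Ideal.span
          ({p | ∃ i j, p = (genX n * genY n - genY n * genX n) i j} ∪
            {(genX n).det - 1, (genY n).det - 1})) =
    ((n ^ 2 + n - 2 : ℕ) : WithBot (WithTop ℕ)) :=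
  krullDim_commutingVariety_SL_general ℂ n hn
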